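/- Let a₊, a₋ ∈ ℂ with Re a₊ > 0 and Re a₋ > 0, let δ ∈ {+,−}, and let l ∈ ℂ⁴ satisfy exp(−2πi(l₁+l₂+l₃+l₄+2ia)) = exp(−2πa_{−δ}). Let Θ_{1,δ} denote the linear span, in the space of functions ℂ → ℂ, of the functions z ↦ R_δ(z+y)R_δ(z−y) and z ↦ R_δ(z+y+1/2)R_δ(z−y+1/2) as y ranges over ℂ. Then for each δ′ ∈ {+,−}, the operator A_{R,δ′}(l) maps Θ_{1,δ} into Θ_{1,δ}. -/

import Mathlib

open Complex Filter

noncomputable section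

/-- `R_δ(z) = ∏_{k≥1} (1 − q_δ^{2k−1} e^{2iπz})(1 − q_δ^{2k−1} e^{−2iπz})`. -/
def Rfun (qd : ℂ) (z : ℂ) : ℂ :=
  ∏' k : ℕ, ((1 - qd ^ (2 * k + 1) * Complex.exp (2 * Real.pi * I * z)) *
    (1 - qd ^ (2 * k + 1) * Complex.exp (-(2 * Real.pi * I * z))))

/-- The elliptic gamma function
`G(z) = ∏_{m,n≥1} (1 − q₊^{2m−1}q₋^{2n−1}e^{−2iπz})/(1 − q₊^{2m−1}q₋^{2n−1}e^{2iπz})`. -/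
def Gfun (qp qm : ℂ) (z : ℂ) : ℂ :=
  ∏' p : ℕ × ℕ,
    (1 - qp ^ (2 * p.1 + 1) * qm ^ (2 * p.2 + 1) * Complex.exp (-(2 * Real.pi * I * z))) /
    (1 - qp ^ (2 * p.1 + 1) * qm ^ (2 * p.2 + 1) * Complex.exp (2 * Real.pi * I * z))

/-- `a_δ` for `δ ∈ {+,−}` (`true = +`, `false = −`). -/
def aof (ap am : ℂ) (δ : Bool) : ℂ := if δ then ap else am

/-- `f_δ(l;z) = ∏_{n=1}^4 R_δ(z+l_n+ia_{−δ}/4) / R_δ(2z−ia_δ/2)`. -/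
def fδ (ap am : ℂ) (δ : Bool) (l : Fin 4 → ℂ) (z : ℂ) : ℂ :=
  (∏ n : Fin 4, Rfun (Complex.exp (-(Real.pi : ℂ) * aof ap am δ))
      (z + l n + I * aof ap am (!δ) / 4)) /
    Rfun (Complex.exp (-(Real.pi : ℂ) * aof ap am δ)) (2 * z - I * aof ap am δ / 2)

/-- The space `Θ_{1,δ}`: the span of the functions `z ↦ R_δ(z+y)R_δ(z−y)` and
`z ↦ R_δ(z+y+1/2)R_δ(z−y+1/2)`, `y ∈ ℂ`. -/
def Theta1 (ap am : ℂ) (δ : Bool) : Submodule ℂ (ℂ → ℂ) :=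
  Submodule.span ℂ
    ({g | ∃ y : ℂ, g = fun z => Rfun (Complex.exp (-(Real.pi : ℂ) * aof ap am δ)) (z + y) *
        Rfun (Complex.exp (-(Real.pi : ℂ) * aof ap am δ)) (z - y)} ∪
     {g | ∃ y : ℂ, g = fun z => Rfun (Complex.exp (-(Real.pi : ℂ) * aof ap am δ)) (z + y + 1/2) *
        Rfun (Complex.exp (-(Real.pi : ℂ) * aof ap am δ)) (z - y + 1/2)})

/-! ### Infinite products -/

/-- The product `∏_{k≥0} (1 − q^{2k+1} u)`. -/
def oddPochhammer (q u : ℂ) : ℂ := ∏' k : ℕ, (1 - q ^ (2 * k + 1) * u)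

lemma summable_odd_pow {q : ℂ} (hq : ‖q‖ < 1) (u : ℝ) :
    Summable fun k : ℕ => ‖q‖ ^ (2 * k + 1) * u :=
  ((summable_geometric_of_lt_one (norm_nonneg _) hq).comp_injective
    (i := fun k : ℕ => 2 * k + 1) (fun a b h => by simpa using h)).mul_right u

lemma multipliable_oddPochhammer {q : ℂ} (hq : ‖q‖ < 1) (u : ℂ) :
    Multipliable fun k : ℕ => 1 - q ^ (2 * k + 1) * u := by
  simp_rw [sub_eq_add_neg]
  apply multipliable_one_add_of_summable
  simpa using summable_odd_pow hq ‖u‖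

lemma differentiable_oddPochhammer {q : ℂ} (hq : ‖q‖ < 1) :
    Differentiable ℂ (oddPochhammer q) := by
  intro u
  have h : HasProdLocallyUniformlyOn (fun (k : ℕ) (v : ℂ) => 1 + -(q ^ (2 * k + 1) * v))
      (fun v => ∏' k : ℕ, (1 + -(q ^ (2 * k + 1) * v))) (Metric.ball 0 (‖u‖ + 1)) := by
    apply (summable_odd_pow hq (‖u‖ + 1)).hasProdLocallyUniformlyOn_one_add Metric.isOpen_ball
    · refine Eventually.of_forall fun n x hx => ?_
      rw [norm_neg, norm_mul, norm_pow]
      have : ‖x‖ < ‖u‖ + 1 := by simpa using hx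
      gcongr
    · intro n
      fun_prop
  have hd : DifferentiableOn ℂ (oddPochhammer q) (Metric.ball 0 (‖u‖ + 1)) := by
    have := h.differentiableOn
      (.of_forall fun _ ↦ by simpa [Finset.prod_fn] using
        DifferentiableOn.finsetProd (fun _ _ ↦ by fun_prop)) Metric.isOpen_ball
    exact this.congr fun v _ => by simp only [oddPochhammer, sub_eq_add_neg]
  exact hd.differentiableAt (Metric.isOpen_ball.mem_nhds (by simp))

lemma oddPochhammer_eq_mul {q : ℂ} (hq : ‖q‖ < 1) (u : ℂ) :
    oddPochhammer q u = (1 - q * u) * oddPochhammer q (q ^ 2 * u) := by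
  have h : ∀ k : ℕ, 1 - q ^ (2 * (k + 1) + 1) * u = 1 - q ^ (2 * k + 1) * (q ^ 2 * u) :=
    fun k => by ring
  unfold oddPochhammer
  rw [tprod_eq_zero_mul' (by simpa only [h] using multipliable_oddPochhammer hq (q ^ 2 * u))]
  simp only [h]
  simp

lemma oddPochhammer_ne_zero {q : ℂ} (hq : ‖q‖ < 1) {u : ℂ} (hu : ‖u‖ ≤ 1) :
    oddPochhammer q u ≠ 0 := by
  unfold oddPochhammer
  simp_rw [sub_eq_add_neg]
  refine tprod_one_add_ne_zero_of_summable (fun k h => ?_)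
    (by simpa using summable_odd_pow hq ‖u‖)
  have h1 : q ^ (2 * k + 1) * u = 1 := by linear_combination -h
  have h2 : ‖q‖ ^ (2 * k + 1) * ‖u‖ < 1 := by
    calc ‖q‖ ^ (2 * k + 1) * ‖u‖ ≤ ‖q‖ ^ (2 * k + 1) * 1 := by gcongr
      _ < 1 := by rw [mul_one]; exact pow_lt_one₀ (norm_nonneg _) hq (by omega)
  rw [← norm_pow, ← norm_mul, h1, norm_one] at h2
  exact lt_irrefl _ h2

lemma oddPochhammer_simple_zero {q : ℂ} (hq : ‖q‖ < 1) {u : ℂ} (hu : oddPochhammer q u = 0) :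
    (∃ k : ℕ, q ^ (2 * k + 1) * u = 1) ∧ deriv (oddPochhammer q) u ≠ 0 := by
  have key : ∀ n : ℕ, ∀ u : ℂ, ‖q ^ 2‖ ^ n * ‖u‖ ≤ 1 → oddPochhammer q u = 0 →
      (∃ k : ℕ, q ^ (2 * k + 1) * u = 1) ∧ deriv (oddPochhammer q) u ≠ 0 := by
    intro n
    induction n with
    | zero =>
      intro u h hu
      exact absurd hu (oddPochhammer_ne_zero hq (by simpa using h))
    | succ n ih =>
      intro u h hu
      have hder : deriv (oddPochhammer q) u = -q * oddPochhammer q (q ^ 2 * u) +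
          (1 - q * u) * (deriv (oddPochhammer q) (q ^ 2 * u) * q ^ 2) := by
        have h1 : HasDerivAt (fun v : ℂ => 1 - q * v) (-q) u := by
          simpa using ((hasDerivAt_id u).const_mul q).const_sub 1
        have h2 : HasDerivAt (fun v : ℂ => q ^ 2 * v) (q ^ 2) u := by
          simpa using (hasDerivAt_id u).const_mul (q ^ 2)
        have h3 := h1.mul
          ((differentiable_oddPochhammer hq (q ^ 2 * u)).hasDerivAt.comp u h2)
        have h4 : oddPochhammer q =
            (fun v : ℂ => 1 - q * v) * (oddPochhammer q ∘ fun v : ℂ => q ^ 2 * v) :=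
          funext fun v => oddPochhammer_eq_mul hq v
        rw [← h4] at h3
        exact h3.deriv
      by_cases hqu : 1 - q * u = 0
      · have hqu' : q * u = 1 := by linear_combination -hqu
        refine ⟨⟨0, by simpa using hqu'⟩, ?_⟩
        rw [hder, hqu, zero_mul, add_zero]
        have h5 : q ^ 2 * u = q := by linear_combination q * hqu'
        rw [h5]
        exact mul_ne_zero (neg_ne_zero.2 (left_ne_zero_of_mul_eq_one hqu'))
          (oddPochhammer_ne_zero hq hq.le)
      · have h6 : oddPochhammer q (q ^ 2 * u) = 0 := by
          rw [oddPochhammer_eq_mul hq] at hu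
          exact (mul_eq_zero.1 hu).resolve_left hqu
        obtain ⟨⟨k, hk⟩, hd⟩ := ih (q ^ 2 * u) (by
          rw [norm_mul, ← mul_assoc, ← pow_succ]
          exact h) h6
        refine ⟨⟨k + 1, by rw [← hk]; ring⟩, ?_⟩
        rw [hder, h6, mul_zero, zero_add]
        refine mul_ne_zero hqu (mul_ne_zero hd (pow_ne_zero _ ?_))
        rintro rfl
        simp at hk
  have ht : Tendsto (fun n : ℕ => ‖q ^ 2‖ ^ n * ‖u‖) atTop (nhds 0) := by
    have := (tendsto_pow_atTop_nhds_zero_of_lt_one (norm_nonneg (q ^ 2))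
      (by rw [norm_pow]; exact pow_lt_one₀ (norm_nonneg _) hq two_ne_zero)).mul_const ‖u‖
    simpa using this
  obtain ⟨n, hn⟩ := (ht.eventually (ge_mem_nhds zero_lt_one)).exists
  exact key n u hn hu

/-! ### Quotients of entire functions -/

/-- A differentiable function vanishing at the zeros of a differentiable function with only
simple zeros is divisible by it. -/
lemma exists_differentiable_factor {E N : ℂ → ℂ} (hE : Differentiable ℂ E)
    (hN : Differentiable ℂ N) (h : ∀ z, E z = 0 → N z = 0 ∧ deriv E z ≠ 0) :
    ∃ g : ℂ → ℂ, Differentiable ℂ g ∧ ∀ z, N z = E z * g z := by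
  classical
  let g : ℂ → ℂ := fun z => if E z = 0 then deriv N z / deriv E z else N z / E z
  refine ⟨g, fun z => ?_, fun z => ?_⟩
  · by_cases hz : E z = 0
    · have hdE : Differentiable ℂ (dslope E z) := fun w =>
        ((Complex.differentiableOn_dslope univ_mem).2 hE.differentiableOn).differentiableAt
          univ_mem
      have hdN : Differentiable ℂ (dslope N z) := fun w =>
        ((Complex.differentiableOn_dslope univ_mem).2 hN.differentiableOn).differentiableAt
          univ_mem
      have hne : dslope E z z ≠ 0 := by rw [dslope_same]; exact (h z hz).2
      refine ((hdN z).div (hdE z) hne).congr_of_eventuallyEq ?_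
      filter_upwards [(hdE z).continuousAt.eventually_ne hne] with w hw
      by_cases hwz : w = z
      · subst hwz
        simp [g, hz, dslope_same]
      · have hEw : E w = (w - z) * dslope E z w := by
          have := sub_smul_dslope E z w
          rw [hz, sub_zero, smul_eq_mul] at this
          exact this.symm
        have hNw : N w = (w - z) * dslope N z w := by
          have := sub_smul_dslope N z w
          rw [(h z hz).1, sub_zero, smul_eq_mul] at this
          exact this.symm
        have hsub : w - z ≠ 0 := sub_ne_zero.2 hwz
        have hEw0 : E w ≠ 0 := by rw [hEw]; exact mul_ne_zero hsub hw
        simp only [g, if_neg hEw0, Pi.div_apply]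
        rw [hEw, hNw, mul_div_mul_left _ _ hsub]
    · refine ((hN z).div (hE z) hz).congr_of_eventuallyEq ?_
      filter_upwards [(hE z).continuousAt.eventually_ne hz] with w hw
      simp [g, hw]
  · by_cases hz : E z = 0
    · rw [(h z hz).1, hz, zero_mul]
    · simp only [g, if_neg hz]
      field_simp

lemma eq_of_mul_eq_mul_of_simple_zeros {E g₁ g₂ : ℂ → ℂ} (hE : Differentiable ℂ E)
    (h : ∀ z, E z = 0 → deriv E z ≠ 0) (h₁ : Differentiable ℂ g₁) (h₂ : Differentiable ℂ g₂)
    (heq : ∀ z, E z * g₁ z = E z * g₂ z) (z : ℂ) : g₁ z = g₂ z := by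
  by_cases hz : E z = 0
  · have e₁ := ((hE z).hasDerivAt.mul (h₁ z).hasDerivAt).deriv
    have e₂ := ((hE z).hasDerivAt.mul (h₂ z).hasDerivAt).deriv
    have e : E * g₁ = E * g₂ := funext heq
    rw [e, e₂, hz, zero_mul, zero_mul, add_zero, add_zero] at e₁
    exact (mul_left_cancel₀ (h z hz) e₁).symm
  · exact mul_left_cancel₀ hz (heq z)

/-- An entire function with two real-independent periods `1` and `ia` is constant. -/
lemma eq_const_of_periodic {a : ℂ} (ha : 0 < a.re) {g : ℂ → ℂ} (hg : Differentiable ℂ g)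
    (h1 : ∀ z, g (z + 1) = g z) (h2 : ∀ z, g (z + I * a) = g z) (z : ℂ) : g z = g 0 := by
  have p1 : Function.Periodic g 1 := h1
  have p2 : Function.Periodic g (I * a) := h2
  have hK : IsCompact ((fun p : ℝ × ℝ => g (p.1 + p.2 * (I * a))) ''
      (Set.Icc 0 1 ×ˢ Set.Icc 0 1)) := by
    refine (isCompact_Icc.prod isCompact_Icc).image ?_
    have := hg.continuous
    fun_prop
  refine hg.apply_eq_apply_of_bounded (hK.isBounded.subset ?_) z 0
  rintro _ ⟨w, rfl⟩
  have hane : a.re ≠ 0 := ha.ne'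
  obtain ⟨x, y, hw⟩ : ∃ x y : ℝ, w = x + y * (I * a) :=
    ⟨w.re + w.im / a.re * a.im, w.im / a.re, by
      apply Complex.ext <;> simp; field_simp⟩
  refine ⟨(Int.fract x, Int.fract y), ⟨⟨Int.fract_nonneg _, (Int.fract_lt_one _).le⟩,
    ⟨Int.fract_nonneg _, (Int.fract_lt_one _).le⟩⟩, ?_⟩
  have e : w = (Int.fract x : ℝ) + (Int.fract y : ℝ) * (I * a) + (⌊x⌋ : ℂ) * 1 +
      (⌊y⌋ : ℂ) * (I * a) := by
    have hx : (x : ℂ) = (⌊x⌋ : ℂ) + (Int.fract x : ℝ) := by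
      exact_mod_cast (Int.floor_add_fract x).symm
    have hy : (y : ℂ) = (⌊y⌋ : ℂ) + (Int.fract y : ℝ) := by
      exact_mod_cast (Int.floor_add_fract y).symm
    rw [hw, hx, hy]
    ring
  simp only
  rw [e, p2.int_mul ⌊y⌋ _, p1.int_mul ⌊x⌋ _]

/-! ### The function `R` -/

/-- The function `R_δ` in terms of `a = a_δ`. -/
abbrev Rper (a z : ℂ) : ℂ := Rfun (Complex.exp (-(Real.pi : ℂ) * a)) z

lemma norm_nome_lt_one {a : ℂ} (ha : 0 < a.re) : ‖Complex.exp (-(Real.pi : ℂ) * a)‖ < 1 := by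
  rw [Complex.norm_exp, Real.exp_lt_one_iff]
  simpa using mul_pos Real.pi_pos ha

lemma Rper_eq {a : ℂ} (ha : 0 < a.re) (z : ℂ) :
    Rper a z = oddPochhammer (Complex.exp (-(Real.pi : ℂ) * a)) (Complex.exp (2 * Real.pi * I * z)) *
      oddPochhammer (Complex.exp (-(Real.pi : ℂ) * a)) (Complex.exp (-(2 * Real.pi * I * z))) :=
  (multipliable_oddPochhammer (norm_nome_lt_one ha) _).tprod_mul
    (multipliable_oddPochhammer (norm_nome_lt_one ha) _)

lemma Rper_neg (a z : ℂ) : Rper a (-z) = Rper a z := by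
  simp only [Rper, Rfun]
  congr 1
  funext k
  rw [mul_neg, neg_neg, mul_comm]

lemma exp_two_pi_add_one (z : ℂ) :
    Complex.exp (2 * Real.pi * I * (z + 1)) = Complex.exp (2 * Real.pi * I * z) := by
  rw [mul_add, mul_one, Complex.exp_add, Complex.exp_two_pi_mul_I, mul_one]

lemma Rper_add_one (a z : ℂ) : Rper a (z + 1) = Rper a z := by
  simp only [Rper, Rfun, Complex.exp_neg, exp_two_pi_add_one]

lemma differentiable_Rper {a : ℂ} (ha : 0 < a.re) : Differentiable ℂ (Rper a) := by
  have h := differentiable_oddPochhammer (norm_nome_lt_one ha)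
  have e : Rper a = fun z => _ := funext fun z => Rper_eq ha z
  rw [e]
  exact (h.comp (by fun_prop)).mul (h.comp (by fun_prop))

lemma Rper_add {a : ℂ} (ha : 0 < a.re) (z : ℂ) :
    Rper a (z + I * a) = -Complex.exp (-(2 * Real.pi * I * z) + Real.pi * a) * Rper a z := by
  set q := Complex.exp (-(Real.pi : ℂ) * a) with hq
  have hq1 : ‖q‖ < 1 := norm_nome_lt_one ha
  set w := Complex.exp (2 * Real.pi * I * z) with hw
  have hw0 : w ≠ 0 := Complex.exp_ne_zero _
  have hq0 : q ≠ 0 := Complex.exp_ne_zero _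
  have e1 : Complex.exp (2 * Real.pi * I * (z + I * a)) = q ^ 2 * w := by
    rw [hq, hw, ← Complex.exp_nat_mul, ← Complex.exp_add]
    congr 1
    push_cast
    linear_combination (2 * Real.pi * a) * Complex.I_sq
  have e2 : Complex.exp (-(2 * Real.pi * I * z) + Real.pi * a) = q⁻¹ * w⁻¹ := by
    rw [hq, hw, ← Complex.exp_neg, ← Complex.exp_neg, ← Complex.exp_add]
    congr 1
    ring
  rw [Rper_eq ha, Rper_eq ha, ← hq, Complex.exp_neg, Complex.exp_neg, e1, e2, ← hw,
    oddPochhammer_eq_mul hq1 w, oddPochhammer_eq_mul hq1 (q ^ 2 * w)⁻¹]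
  have e3 : q ^ 2 * (q ^ 2 * w)⁻¹ = w⁻¹ := by field_simp
  rw [e3]
  field_simp
  ring

lemma Rper_eq_zero {a : ℂ} (ha : 0 < a.re) {z : ℂ} (hz : Rper a z = 0) :
    (∃ m n : ℤ, z = I * a / 2 + m + n * (I * a)) ∧ deriv (Rper a) z ≠ 0 := by
  set q := Complex.exp (-(Real.pi : ℂ) * a) with hq
  have hq1 : ‖q‖ < 1 := norm_nome_lt_one ha
  have hpi : (Real.pi : ℂ) ≠ 0 := by exact_mod_cast Real.pi_ne_zero
  have hpow : ∀ k : ℕ, ∀ x, q ^ (2 * k + 1) * Complex.exp x =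
      Complex.exp (-(Real.pi : ℂ) * a * (2 * k + 1) + x) := by
    intro k x
    rw [hq, ← Complex.exp_nat_mul, ← Complex.exp_add]
    congr 1
    push_cast
    ring
  -- it suffices to treat the zeros of the first factor, since `R` is even
  have key : ∀ z : ℂ, oddPochhammer q (Complex.exp (2 * Real.pi * I * z)) = 0 →
      (∃ m n : ℤ, z = I * a / 2 + m + n * (I * a)) ∧ deriv (Rper a) z ≠ 0 := by
    intro z hz
    set w := Complex.exp (2 * Real.pi * I * z) with hw
    obtain ⟨⟨k, hk⟩, hd⟩ := oddPochhammer_simple_zero hq1 hz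
    constructor
    · rw [hw, hpow, Complex.exp_eq_one_iff] at hk
      obtain ⟨m, hm⟩ := hk
      refine ⟨m, -k - 1, ?_⟩
      have h2 : (2 * Real.pi * I : ℂ) ≠ 0 := by simp [hpi]
      apply mul_left_cancel₀ h2
      push_cast
      linear_combination hm + (Real.pi * a * (2 * k + 1)) * Complex.I_sq
    · have hle : ‖Complex.exp (-(2 * Real.pi * I * z))‖ ≤ 1 := by
        rw [Complex.exp_neg, ← hw, norm_inv]
        apply inv_le_one_of_one_le₀
        by_contra hlt
        exact oddPochhammer_ne_zero hq1 (not_le.1 hlt).le hz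
      have h0 := differentiable_oddPochhammer hq1
      have i1 : HasDerivAt (fun v : ℂ => Complex.exp (2 * Real.pi * I * v))
          (w * (2 * Real.pi * I)) z := by
        simpa using ((hasDerivAt_id z).const_mul (2 * Real.pi * I : ℂ)).cexp
      have i2 : DifferentiableAt ℂ (fun v : ℂ => Complex.exp (-(2 * Real.pi * I * v))) z := by
        fun_prop
      have h1 := ((h0 w).hasDerivAt.comp z i1).mul ((h0 _).comp z i2).hasDerivAt
      have e : Rper a = (oddPochhammer q ∘ fun v => Complex.exp (2 * Real.pi * I * v)) *
          (oddPochhammer q ∘ fun v => Complex.exp (-(2 * Real.pi * I * v))) :=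
        funext fun v => Rper_eq ha v
      rw [e, h1.deriv]
      simp only [Function.comp_apply]
      rw [← hw, hz, zero_mul, add_zero]
      refine mul_ne_zero (mul_ne_zero hd (mul_ne_zero (Complex.exp_ne_zero _) ?_))
        (oddPochhammer_ne_zero hq1 hle)
      simp [hpi]
  rw [Rper_eq ha, mul_eq_zero] at hz
  rcases hz with hz | hz
  · exact key z hz
  · obtain ⟨⟨m, n, h⟩, hd⟩ := key (-z) (by rw [mul_neg]; exact hz)
    refine ⟨⟨-m, -n - 1, ?_⟩, ?_⟩
    · push_cast
      linear_combination -h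
    · have e : (fun v => Rper a (-v)) = Rper a := funext (Rper_neg a)
      have := deriv_comp_neg (Rper a) z
      rw [e] at this
      rw [this]
      exact neg_ne_zero.2 hd

/-! ### Theta functions of even order -/

/-- Entire functions `g` with `g(z+1) = g(z)` and `g(z+ia) = e^{r(2πa−4πiz)} g(z)`. -/
structure IsTheta (a : ℂ) (r : ℕ) (g : ℂ → ℂ) : Prop where
  differentiable : Differentiable ℂ g
  add_one : ∀ z, g (z + 1) = g z
  add_period : ∀ z, g (z + I * a) =
    Complex.exp (r * (2 * Real.pi * a - 4 * Real.pi * I * z)) * g z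

namespace IsTheta

variable {a : ℂ} {r s : ℕ} {f g : ℂ → ℂ}

lemma add (hf : IsTheta a r f) (hg : IsTheta a r g) : IsTheta a r (f + g) where
  differentiable := hf.differentiable.add hg.differentiable
  add_one z := by simp [hf.add_one, hg.add_one]
  add_period z := by simp only [Pi.add_apply, hf.add_period, hg.add_period]; ring

lemma const_mul (c : ℂ) (hg : IsTheta a r g) : IsTheta a r (fun z => c * g z) where
  differentiable := hg.differentiable.const_mul c
  add_one z := by simp only [hg.add_one]
  add_period z := by simp only [hg.add_period]; ring

lemma sub_const_mul (c : ℂ) (hf : IsTheta a r f) (hg : IsTheta a r g) :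
    IsTheta a r (fun z => f z - c * g z) := by
  convert hf.add (hg.const_mul (-c)) using 1
  funext z
  simp [sub_eq_add_neg]

lemma sub_comp_neg (hg : IsTheta a r g) : IsTheta a r (fun z => g z - g (-z)) where
  differentiable := hg.differentiable.sub (hg.differentiable.comp differentiable_neg)
  add_one z := by
    have h := hg.add_one (-(z + 1))
    rw [show -(z + 1) + 1 = -z by ring] at h
    rw [hg.add_one, h]
  add_period z := by
    have h := hg.add_period (-(z + I * a))
    rw [show -(z + I * a) + I * a = -z by ring] at h
    rw [hg.add_period, h]
    have e : (r : ℂ) * (2 * Real.pi * a - 4 * Real.pi * I * z) +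
        r * (2 * Real.pi * a - 4 * Real.pi * I * -(z + I * a)) = 0 := by
      linear_combination (4 * r * Real.pi * a) * Complex.I_sq
    have e' := Complex.exp_add _ _ ▸ congrArg Complex.exp e
    rw [Complex.exp_zero] at e'
    linear_combination g (-(z + I * a)) * e'

lemma add_int (hg : IsTheta a r g) (m : ℤ) (z : ℂ) : g (z + m) = g z := by
  have h : Function.Periodic g 1 := hg.add_one
  simpa using h.int_mul m z

lemma add_nat_mul_period (hg : IsTheta a r g) (n : ℕ) (z : ℂ) : g (z + n * (I * a)) =
    Complex.exp (r * (2 * Real.pi * n ^ 2 * a - 4 * Real.pi * n * I * z)) * g z := by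
  induction n with
  | zero => simp
  | succ n ih =>
    have e : z + (n + 1 : ℕ) * (I * a) = z + n * (I * a) + I * a := by push_cast; ring
    rw [e, hg.add_period, ih, ← mul_assoc, ← Complex.exp_add]
    congr 2
    push_cast
    linear_combination (-4 * r * Real.pi * n * a) * Complex.I_sq

lemma add_int_mul_period (hg : IsTheta a r g) (n : ℤ) (z : ℂ) : g (z + n * (I * a)) =
    Complex.exp (r * (2 * Real.pi * n ^ 2 * a - 4 * Real.pi * n * I * z)) * g z := by
  obtain ⟨n, rfl | rfl⟩ := n.eq_nat_or_neg
  · simpa using hg.add_nat_mul_period n z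
  · have h := hg.add_nat_mul_period n (z - n * (I * a))
    rw [sub_add_cancel] at h
    rw [h]
    push_cast
    have e : (r : ℂ) * (2 * Real.pi * (-n) ^ 2 * a - 4 * Real.pi * (-n) * I * z) +
        r * (2 * Real.pi * n ^ 2 * a - 4 * Real.pi * n * I * (z - n * (I * a))) = 0 := by
      linear_combination (4 * r * Real.pi * n ^ 2 * a) * Complex.I_sq
    rw [neg_mul, ← sub_eq_add_neg, ← mul_assoc (Complex.exp _), ← Complex.exp_add, e,
      Complex.exp_zero, one_mul]

lemma eq_zero_of_add (hg : IsTheta a r g) {z : ℂ} (hz : g z = 0) (m n : ℤ) :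
    g (z + m + n * (I * a)) = 0 := by
  rw [hg.add_int_mul_period, hg.add_int, hz, mul_zero]

/-- An odd theta function vanishes at the half-periods. -/
lemma eq_zero_of_odd (hg : IsTheta a r g) (hodd : ∀ z, g (-z) = -g z) {z : ℂ} {m n : ℤ}
    (hz : 2 * z = m + n * (I * a)) : g z = 0 := by
  have h := hg.add_int_mul_period n (-z + m)
  rw [hg.add_int, hodd] at h
  have e1 : -z + m + n * (I * a) = z := by linear_combination -hz
  have e2 : (r : ℂ) * (2 * Real.pi * n ^ 2 * a - 4 * Real.pi * n * I * (-z + m)) =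
      (-(r * n * m : ℤ) : ℤ) * (2 * Real.pi * I) := by
    push_cast
    linear_combination (2 * Real.pi * r * n * I) * hz + 2 * Real.pi * r * n ^ 2 * a * Complex.I_sq
  rw [e1, e2, Complex.exp_int_mul_two_pi_mul_I, one_mul] at h
  have : 2 * g z = 0 := by linear_combination h
  simpa using this

/-- The quotient of two theta functions, if entire, is a theta function. -/
lemma of_mul {E N : ℂ → ℂ} (hE : IsTheta a s E) (hN : IsTheta a (r + s) N)
    (hsimple : ∀ z, E z = 0 → deriv E z ≠ 0) (hg : Differentiable ℂ g)
    (h : ∀ z, N z = E z * g z) : IsTheta a r g where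
  differentiable := hg
  add_one z := by
    refine eq_of_mul_eq_mul_of_simple_zeros hE.differentiable hsimple
      (g₁ := fun z => g (z + 1)) (hg.comp (by fun_prop)) hg (fun w => ?_) z
    rw [← h w, ← hN.add_one w, h, hE.add_one]
  add_period z := by
    refine eq_of_mul_eq_mul_of_simple_zeros hE.differentiable hsimple
      (g₁ := fun z => g (z + I * a)) (hg.comp (by fun_prop))
      (g₂ := fun z => Complex.exp (r * (2 * Real.pi * a - 4 * Real.pi * I * z)) * g z)
      (Differentiable.mul (by fun_prop) hg)
      (fun w => ?_) z
    have e := h (w + I * a)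
    rw [hN.add_period, hE.add_period, h] at e
    apply mul_left_cancel₀ (Complex.exp_ne_zero (s * (2 * Real.pi * a - 4 * Real.pi * I * w)))
    rw [← mul_assoc, ← e]
    push_cast
    rw [add_mul, Complex.exp_add]
    ring

lemma eq_const (ha : 0 < a.re) (hg : IsTheta a 0 g) (z : ℂ) : g z = g 0 :=
  eq_const_of_periodic ha hg.differentiable hg.add_one
    (fun w => by simpa using hg.add_period w) z

end IsTheta

/-- The odd theta function `e^{−2πiz} R(2z − ia/2)`. -/
def thetaDen (a z : ℂ) : ℂ := Complex.exp (-(2 * Real.pi * I * z)) * Rper a (2 * z - I * a / 2)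

lemma thetaDen_neg {a : ℂ} (ha : 0 < a.re) (z : ℂ) : thetaDen a (-z) = -thetaDen a z := by
  have e : 2 * -z - I * a / 2 = -(2 * z - I * a / 2 + I * a) := by ring
  rw [thetaDen, thetaDen, e, Rper_neg, Rper_add ha, ← mul_assoc, mul_neg, ← Complex.exp_add]
  rw [neg_mul]
  congr 3
  linear_combination (Real.pi * a) * Complex.I_sq

lemma isTheta_thetaDen {a : ℂ} (ha : 0 < a.re) : IsTheta a 2 (thetaDen a) where
  differentiable := by
    have h := differentiable_Rper ha
    exact Differentiable.mul (by fun_prop) (h.comp (by fun_prop))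
  add_one z := by
    have e : 2 * (z + 1) - I * a / 2 = 2 * z - I * a / 2 + 1 + 1 := by ring
    rw [thetaDen, thetaDen, e, Rper_add_one, Rper_add_one, Complex.exp_neg, Complex.exp_neg,
      exp_two_pi_add_one]
  add_period z := by
    have e : 2 * (z + I * a) - I * a / 2 = 2 * z - I * a / 2 + I * a + I * a := by ring
    rw [thetaDen, thetaDen, e, Rper_add ha, Rper_add ha]
    simp only [neg_mul, mul_neg, neg_neg, ← mul_assoc, ← Complex.exp_add]
    congr 2
    push_cast
    linear_combination (-2 * Real.pi * a) * Complex.I_sq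

lemma thetaDen_eq_zero {a : ℂ} (ha : 0 < a.re) {z : ℂ} (hz : thetaDen a z = 0) :
    (∃ m n : ℤ, 2 * z = m + n * (I * a)) ∧ deriv (thetaDen a) z ≠ 0 := by
  have hz' : Rper a (2 * z - I * a / 2) = 0 :=
    (mul_eq_zero.1 hz).resolve_left (Complex.exp_ne_zero _)
  obtain ⟨⟨m, n, h⟩, hd⟩ := Rper_eq_zero ha hz'
  refine ⟨⟨m, n + 1, by push_cast; linear_combination h⟩, ?_⟩
  have h1 : DifferentiableAt ℂ (fun v : ℂ => Complex.exp (-(2 * Real.pi * I * v))) z := by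
    fun_prop
  have h2 : HasDerivAt (fun v : ℂ => 2 * v - I * a / 2) 2 z := by
    simpa using ((hasDerivAt_id z).const_mul 2).sub_const (I * a / 2)
  have h3 := h1.hasDerivAt.mul ((differentiable_Rper ha _).hasDerivAt.comp z h2)
  have e : thetaDen a = (fun v : ℂ => Complex.exp (-(2 * Real.pi * I * v))) *
      (Rper a ∘ fun v : ℂ => 2 * v - I * a / 2) := rfl
  rw [e, h3.deriv]
  simp only [Function.comp_apply]
  rw [hz', mul_zero, zero_add]
  exact mul_ne_zero (Complex.exp_ne_zero _) (mul_ne_zero hd two_ne_zero)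

/-- The antisymmetrization of a theta function is divisible by `thetaDen`, with even quotient. -/
lemma IsTheta.exists_antisymm_factor {a : ℂ} (ha : 0 < a.re) {r : ℕ} {U : ℂ → ℂ}
    (hU : IsTheta a (r + 2) U) : ∃ g : ℂ → ℂ, IsTheta a r g ∧ (∀ z, g (-z) = g z) ∧
      ∀ z, U z - U (-z) = thetaDen a z * g z := by
  have hE := isTheta_thetaDen ha
  have hs : ∀ z, thetaDen a z = 0 → deriv (thetaDen a) z ≠ 0 :=
    fun z hz => (thetaDen_eq_zero ha hz).2
  have hN := hU.sub_comp_neg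
  obtain ⟨g, hg, h⟩ := exists_differentiable_factor hE.differentiable hN.differentiable
    (fun z hz => by
      obtain ⟨⟨m, n, hmn⟩, hd⟩ := thetaDen_eq_zero ha hz
      exact ⟨hN.eq_zero_of_odd (fun w => by rw [neg_neg]; ring) hmn, hd⟩)
  refine ⟨g, .of_mul hE hN hs hg h, fun z => ?_, h⟩
  refine eq_of_mul_eq_mul_of_simple_zeros hE.differentiable hs (g₁ := fun z => g (-z))
    (hg.comp differentiable_neg) hg (fun w => ?_) z
  have h1 := h w
  have h2 := h (-w)
  rw [neg_neg, thetaDen_neg ha] at h2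
  linear_combination h1 + h2

/-! ### The space `Θ_{1,δ}` -/

lemma isTheta_Rper_mul {a : ℂ} (ha : 0 < a.re) (y : ℂ) :
    IsTheta a 1 (fun z => Rper a (z + y) * Rper a (z - y)) where
  differentiable := by
    have h := differentiable_Rper ha
    exact (h.comp (by fun_prop)).mul (h.comp (by fun_prop))
  add_one z := by
    rw [show z + 1 + y = z + y + 1 by ring, show z + 1 - y = z - y + 1 by ring, Rper_add_one,
      Rper_add_one]
  add_period z := by
    rw [show z + I * a + y = z + y + I * a by ring, show z + I * a - y = z - y + I * a by ring,
      Rper_add ha, Rper_add ha]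
    have e : Complex.exp (-(2 * Real.pi * I * (z + y)) + Real.pi * a) *
        Complex.exp (-(2 * Real.pi * I * (z - y)) + Real.pi * a) =
        Complex.exp ((1 : ℕ) * (2 * Real.pi * a - 4 * Real.pi * I * z)) := by
      rw [← Complex.exp_add]
      congr 1
      push_cast
      ring
    rw [← e]
    ring

lemma Rper_mul_neg (a y z : ℂ) :
    Rper a (-z + y) * Rper a (-z - y) = Rper a (z + y) * Rper a (z - y) := by
  rw [show -z + y = -(z - y) by ring, show -z - y = -(z + y) by ring, Rper_neg, Rper_neg, mul_comm]

lemma isTheta_of_mem_Theta1 {ap am : ℂ} {δ : Bool} (ha : 0 < (aof ap am δ).re) {F : ℂ → ℂ}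
    (hF : F ∈ Theta1 ap am δ) : IsTheta (aof ap am δ) 1 F ∧ ∀ z, F (-z) = F z := by
  induction hF using Submodule.span_induction with
  | mem F hF =>
    rcases hF with ⟨y, rfl⟩ | ⟨y, rfl⟩
    · exact ⟨isTheta_Rper_mul ha y, fun z => Rper_mul_neg _ y z⟩
    · have e : (fun z => Rper (aof ap am δ) (z + y + 1 / 2) * Rper (aof ap am δ) (z - y + 1 / 2)) =
          fun z => Rper (aof ap am δ) (z + (y + 1 / 2)) * Rper (aof ap am δ) (z - (y + 1 / 2)) := by
        funext z
        rw [← Rper_add_one _ (z - (y + 1 / 2)), ← add_assoc,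
          show z - (y + 1 / 2) + 1 = z - y + 1 / 2 by ring]
      exact ⟨e ▸ isTheta_Rper_mul ha (y + 1 / 2), fun z => by
        have := congrFun e (-z)
        rw [Rper_mul_neg, ← congrFun e z] at this
        exact this⟩
  | zero => exact ⟨⟨differentiable_const 0, by simp, by simp⟩, by simp⟩
  | add f g _ _ hf hg => exact ⟨hf.1.add hg.1, fun z => by simp [hf.2, hg.2]⟩
  | smul c f _ hf => exact ⟨hf.1.const_mul c, fun z => by simp [hf.2]⟩

/-- `1/4` and `1/2` are not periods. -/
lemma quarter_ne {a : ℂ} (ha : 0 < a.re) {x : ℂ} (hx : x = 1 / 4 ∨ x = 1 / 2)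
    (m n : ℤ) : x ≠ m + n * (I * a) := by
  intro h
  have him := congrArg Complex.im h
  have hn : n = 0 := by
    have : (n : ℝ) * a.re = 0 := by
      rcases hx with rfl | rfl <;> simpa using him.symm
    simpa [ha.ne'] using this
  subst hn
  rcases hx with rfl | rfl
  · have h4 : (4 : ℂ) * m = 1 := by simp at h; rw [← h]; norm_num
    have : (4 : ℤ) * m = 1 := by exact_mod_cast h4
    omega
  · have h4 : (2 : ℂ) * m = 1 := by simp at h; rw [← h]; norm_num
    have : (2 : ℤ) * m = 1 := by exact_mod_cast h4
    omega

lemma Rper_mul_quarter_eq_zero {a : ℂ} (ha : 0 < a.re) {z : ℂ}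
    (hz : Rper a (z + 1 / 4) * Rper a (z - 1 / 4) = 0) :
    (∃ m n : ℤ, z = 1 / 4 + I * a / 2 + m + n * (I * a) ∨
      z = -(1 / 4 + I * a / 2) + m + n * (I * a)) ∧
    deriv (fun z => Rper a (z + 1 / 4) * Rper a (z - 1 / 4)) z ≠ 0 := by
  have hR := differentiable_Rper ha
  have hd : deriv (fun z => Rper a (z + 1 / 4) * Rper a (z - 1 / 4)) z =
      deriv (Rper a) (z + 1 / 4) * Rper a (z - 1 / 4) +
        Rper a (z + 1 / 4) * deriv (Rper a) (z - 1 / 4) :=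
    ((hR _).hasDerivAt.comp_add_const z (1 / 4)).mul
      ((hR _).hasDerivAt.comp_sub_const z (1 / 4)) |>.deriv
  have hnot : Rper a (z + 1 / 4) = 0 → Rper a (z - 1 / 4) ≠ 0 := by
    intro h1 h2
    obtain ⟨⟨m, n, h⟩, -⟩ := Rper_eq_zero ha h1
    obtain ⟨⟨m', n', h'⟩, -⟩ := Rper_eq_zero ha h2
    refine quarter_ne ha (x := 1 / 2) (by simp) (m - m') (n - n') ?_
    push_cast
    linear_combination h - h'
  rw [hd]
  rcases mul_eq_zero.1 hz with h | h
  · obtain ⟨⟨m, n, hmn⟩, hd'⟩ := Rper_eq_zero ha h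
    refine ⟨⟨m, n + 1, Or.inr ?_⟩, ?_⟩
    · push_cast
      linear_combination hmn
    · rw [h, zero_mul, add_zero]
      exact mul_ne_zero hd' (hnot h)
  · obtain ⟨⟨m, n, hmn⟩, hd'⟩ := Rper_eq_zero ha h
    refine ⟨⟨m, n, Or.inl ?_⟩, ?_⟩
    · linear_combination hmn
    · rw [h, mul_zero, zero_add]
      exact mul_ne_zero (fun h' => hnot h' h) hd'

lemma mem_Theta1_of_isTheta {ap am : ℂ} {δ : Bool} (ha : 0 < (aof ap am δ).re) {g : ℂ → ℂ}
    (hg : IsTheta (aof ap am δ) 1 g) (heven : ∀ z, g (-z) = g z) : g ∈ Theta1 ap am δ := by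
  set a := aof ap am δ with hadef
  set e₀ : ℂ → ℂ := fun z => Rper a (z + 0) * Rper a (z - 0) with he₀
  set e₁ : ℂ → ℂ := fun z => Rper a (z + 1 / 4) * Rper a (z - 1 / 4) with he₁
  have m₀ : e₀ ∈ Theta1 ap am δ := Submodule.subset_span (Or.inl ⟨0, rfl⟩)
  have m₁ : e₁ ∈ Theta1 ap am δ := Submodule.subset_span (Or.inl ⟨1 / 4, rfl⟩)
  set p : ℂ := 1 / 4 + I * a / 2 with hp
  have hp0 : e₀ p ≠ 0 := by
    have hRp : Rper a p ≠ 0 := by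
      intro h
      obtain ⟨⟨m, n, hmn⟩, -⟩ := Rper_eq_zero ha h
      refine quarter_ne ha (x := 1 / 4) (by simp) m n ?_
      rw [hp] at hmn
      linear_combination hmn
    simp [he₀, hRp]
  set c := g p / e₀ p with hc
  have hθ := hg.sub_const_mul c (isTheta_Rper_mul ha 0)
  have hzero : g p - c * e₀ p = 0 := by
    rw [hc]
    field_simp
    ring
  have hzero' : g (-p) - c * e₀ (-p) = 0 := by
    rw [heven, show e₀ (-p) = e₀ p from Rper_mul_neg a 0 p, hzero]
  obtain ⟨k, hk, h⟩ := exists_differentiable_factor (isTheta_Rper_mul ha (1 / 4)).differentiable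
    hθ.differentiable (fun z hz => by
      obtain ⟨⟨m, n, rfl | rfl⟩, hd⟩ := Rper_mul_quarter_eq_zero ha hz
      · exact ⟨hθ.eq_zero_of_add hzero m n, hd⟩
      · exact ⟨hθ.eq_zero_of_add hzero' m n, hd⟩)
  have hkθ : IsTheta a 0 k := .of_mul (isTheta_Rper_mul ha (1 / 4)) hθ
    (fun z hz => (Rper_mul_quarter_eq_zero ha hz).2) hk h
  have e : g = c • e₀ + k 0 • e₁ := by
    funext z
    have h' : g z - c * e₀ z = e₁ z * k z := h z
    rw [hkθ.eq_const ha z] at h'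
    simp only [Pi.add_apply, Pi.smul_apply, smul_eq_mul]
    linear_combination h'
  rw [e]
  exact add_mem (Submodule.smul_mem _ _ m₀) (Submodule.smul_mem _ _ m₁)

/-! ### The difference operators -/

/-- `e^{−2πiz}` times the numerator of `f_δ(l;z)`, with `a = a_δ` and `b = a_{−δ}`. -/
def thetaNum (a b : ℂ) (l : Fin 4 → ℂ) (z : ℂ) : ℂ :=
  Complex.exp (-(2 * Real.pi * I * z)) * ∏ n : Fin 4, Rper a (z + l n + I * b / 4)

lemma differentiable_thetaNum {a : ℂ} (ha : 0 < a.re) (b : ℂ) (l : Fin 4 → ℂ) :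
    Differentiable ℂ (thetaNum a b l) := by
  have h : ∀ n, Differentiable ℂ (fun z => Rper a (z + l n + I * b / 4)) :=
    fun n => (differentiable_Rper ha).comp (by fun_prop)
  unfold thetaNum
  simp only [Fin.prod_univ_four]
  exact Differentiable.mul (by fun_prop) ((((h 0).mul (h 1)).mul (h 2)).mul (h 3))

lemma thetaNum_add_one (a b : ℂ) (l : Fin 4 → ℂ) (z : ℂ) :
    thetaNum a b l (z + 1) = thetaNum a b l z := by
  have h : ∀ n, Rper a (z + 1 + l n + I * b / 4) = Rper a (z + l n + I * b / 4) := by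
    intro n
    rw [← Rper_add_one a (z + l n + I * b / 4)]
    congr 1
    ring
  simp only [thetaNum, h, Complex.exp_neg, exp_two_pi_add_one]

lemma thetaNum_add_period {a : ℂ} (ha : 0 < a.re) (b : ℂ) (l : Fin 4 → ℂ) (z : ℂ) :
    thetaNum a b l (z + I * a) =
      Complex.exp ((2 : ℕ) * (2 * Real.pi * a - 4 * Real.pi * I * z)) *
      Complex.exp (-(2 * Real.pi * I) * ((∑ n, l n) + I * (a + b))) * thetaNum a b l z := by
  have h : ∀ n, Rper a (z + I * a + l n + I * b / 4) =
      -Complex.exp (-(2 * Real.pi * I * (z + l n + I * b / 4)) + Real.pi * a) *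
        Rper a (z + l n + I * b / 4) := by
    intro n
    rw [← Rper_add ha]
    congr 1
    ring
  have e : Complex.exp (-(2 * Real.pi * I * (z + I * a))) *
      (Complex.exp (-(2 * Real.pi * I * (z + l 0 + I * b / 4)) + Real.pi * a) *
      Complex.exp (-(2 * Real.pi * I * (z + l 1 + I * b / 4)) + Real.pi * a) *
      Complex.exp (-(2 * Real.pi * I * (z + l 2 + I * b / 4)) + Real.pi * a) *
      Complex.exp (-(2 * Real.pi * I * (z + l 3 + I * b / 4)) + Real.pi * a)) =
      Complex.exp ((2 : ℕ) * (2 * Real.pi * a - 4 * Real.pi * I * z)) *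
      Complex.exp (-(2 * Real.pi * I) * ((∑ n, l n) + I * (a + b))) *
      Complex.exp (-(2 * Real.pi * I * z)) := by
    simp only [← Complex.exp_add, Fin.sum_univ_four]
    congr 1
    push_cast
    ring
  simp only [thetaNum, h, Fin.prod_univ_four]
  linear_combination (Rper a (z + l 0 + I * b / 4) * Rper a (z + l 1 + I * b / 4) *
    Rper a (z + l 2 + I * b / 4) * Rper a (z + l 3 + I * b / 4)) * e

lemma fδ_eq (ap am : ℂ) (δ : Bool) (l : Fin 4 → ℂ) (z : ℂ) :
    fδ ap am δ l z =
      thetaNum (aof ap am δ) (aof ap am (!δ)) l z / thetaDen (aof ap am δ) z := by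
  rw [thetaNum, thetaDen, mul_div_mul_left _ _ (Complex.exp_ne_zero _)]
  rfl

lemma fδ_mul_add_fδ_mul {ap am : ℂ} {δ : Bool} (ha : 0 < (aof ap am δ).re) (l : Fin 4 → ℂ)
    {F : ℂ → ℂ} (hF : ∀ z, F (-z) = F z) (z : ℂ) :
    fδ ap am δ l z * F (z + I * aof ap am (!δ) / 2) +
      fδ ap am δ l (-z) * F (z - I * aof ap am (!δ) / 2) =
    (thetaNum (aof ap am δ) (aof ap am (!δ)) l z * F (z + I * aof ap am (!δ) / 2) -
      thetaNum (aof ap am δ) (aof ap am (!δ)) l (-z) * F (-z + I * aof ap am (!δ) / 2)) /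
      thetaDen (aof ap am δ) z := by
  rw [fδ_eq, fδ_eq, thetaDen_neg ha, ← hF (z - I * aof ap am (!δ) / 2), neg_sub, div_neg,
    sub_eq_neg_add (I * aof ap am (!δ) / 2) z]
  ring

/-- for `μ = exp(−2πa_{−δ})`, the operators `A_{R,δ′}(l)` of both Sklyanin
algebras map the two-dimensional theta space `Θ_{1,δ}` into itself (the image of
`F ∈ Θ_{1,δ}` agrees with an element of `Θ_{1,δ}` away from the zeros of the
denominators `R_{δ′}(±2z−ia_{δ′}/2)`). -/
theorem statement13 (ap am : ℂ) (hap : 0 < ap.re) (ham : 0 < am.re) (δ : Bool)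
    (l : Fin 4 → ℂ)
    (hμ : Complex.exp (-(2 * Real.pi * I) * ((∑ n, l n) + 2 * I * ((ap + am) / 2))) =
      Complex.exp (-(2 * Real.pi) * aof ap am (!δ))) :
    ∀ δ' : Bool, ∀ F : ℂ → ℂ, F ∈ Theta1 ap am δ →
      ∃ g ∈ Theta1 ap am δ, ∀ z : ℂ,
        Rfun (Complex.exp (-(Real.pi : ℂ) * aof ap am δ')) (2 * z - I * aof ap am δ' / 2) ≠ 0 →
        Rfun (Complex.exp (-(Real.pi : ℂ) * aof ap am δ')) (-(2 * z) - I * aof ap am δ' / 2) ≠ 0 →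
        fδ ap am δ' l z * F (z + I * aof ap am (!δ') / 2) +
          fδ ap am δ' l (-z) * F (z - I * aof ap am (!δ') / 2) = g z := by
  intro δ' F hF
  have hre : ∀ ε : Bool, 0 < (aof ap am ε).re := by
    intro ε
    cases ε <;> simpa [aof]
  obtain ⟨hFθ, hFe⟩ := isTheta_of_mem_Theta1 (hre δ) hF
  have hsum : ap + am = aof ap am δ' + aof ap am (!δ') := by
    cases δ' <;> simp [aof, add_comm]
  have hμ' : Complex.exp (-(2 * Real.pi * I) *
      ((∑ n, l n) + I * (aof ap am δ' + aof ap am (!δ')))) =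
      Complex.exp (-(2 * Real.pi) * aof ap am (!δ)) := by
    rw [← hμ, hsum]
    congr 1
    ring
  rcases eq_or_ne δ' δ with rfl | hne
  · set a := aof ap am δ' with ha
    set b := aof ap am (!δ') with hb
    have hU : IsTheta a (1 + 2) (fun z => thetaNum a b l z * F (z + I * b / 2)) := by
      refine ⟨(differentiable_thetaNum (hre δ') b l).mul
        (hFθ.differentiable.comp (by fun_prop)), fun z => ?_, fun z => ?_⟩
      · rw [thetaNum_add_one, ← hFθ.add_one (z + I * b / 2)]
        ring_nf
      · have e : z + I * a + I * b / 2 = z + I * b / 2 + I * a := by ring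
        rw [thetaNum_add_period (hre δ'), e, hFθ.add_period, hμ']
        have e2 : Complex.exp ((2 : ℕ) * (2 * Real.pi * a - 4 * Real.pi * I * z)) *
            Complex.exp (-(2 * Real.pi) * b) * Complex.exp ((1 : ℕ) *
              (2 * Real.pi * a - 4 * Real.pi * I * (z + I * b / 2))) =
            Complex.exp ((1 + 2 : ℕ) * (2 * Real.pi * a - 4 * Real.pi * I * z)) := by
          rw [← Complex.exp_add, ← Complex.exp_add]
          congr 1
          push_cast
          linear_combination (-2 * Real.pi * b) * Complex.I_sq
        rw [← e2]
        ring
    obtain ⟨g, hg, hge, h⟩ := hU.exists_antisymm_factor (hre δ')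
    refine ⟨g, mem_Theta1_of_isTheta (hre δ') hg hge, fun z hz _ => ?_⟩
    have hz' : thetaDen a z ≠ 0 := mul_ne_zero (Complex.exp_ne_zero _) hz
    rw [fδ_mul_add_fδ_mul (hre δ') l hFe z, h z, mul_div_cancel_left₀ _ hz']
  · obtain rfl : δ = !δ' := by cases δ <;> cases δ' <;> simp_all
    rw [Bool.not_not] at hμ'
    set a := aof ap am δ' with ha
    set b := aof ap am (!δ') with hb
    have hFs : ∀ z, F (-z + I * b / 2) = Complex.exp (4 * Real.pi * I * z) * F (z + I * b / 2) := by
      intro z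
      have h := hFθ.add_period (-z - I * b / 2)
      rw [show -z - I * b / 2 + I * b = -z + I * b / 2 by ring, ← hFe (-z - I * b / 2),
        show -(-z - I * b / 2) = z + I * b / 2 by ring] at h
      rw [h]
      congr 2
      push_cast
      linear_combination (2 * Real.pi * b) * Complex.I_sq
    let H : ℂ → ℂ := fun z => Complex.exp (2 * Real.pi * I * z) * F (z + I * b / 2)
    have hHθ : IsTheta b 1 H := by
      refine ⟨Differentiable.mul (by fun_prop) (hFθ.differentiable.comp (by fun_prop)),
        fun z => ?_, fun z => ?_⟩
      · simp only [H]
        rw [exp_two_pi_add_one, ← hFθ.add_one (z + I * b / 2)]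
        ring_nf
      · simp only [H]
        rw [show z + I * b + I * b / 2 = z + I * b / 2 + I * b by ring, hFθ.add_period,
          ← mul_assoc, ← mul_assoc, ← Complex.exp_add, ← Complex.exp_add]
        congr 2
        push_cast
        ring
    have hHe : ∀ z, H (-z) = H z := by
      intro z
      simp only [H]
      rw [hFs, ← mul_assoc, ← Complex.exp_add]
      congr 2
      ring
    have hV : IsTheta a (0 + 2)
        (fun z => thetaNum a b l z * Complex.exp (-(2 * Real.pi * I * z))) := by
      refine ⟨(differentiable_thetaNum (hre δ') b l).mul (by fun_prop), fun z => ?_, fun z => ?_⟩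
      · rw [thetaNum_add_one, Complex.exp_neg, exp_two_pi_add_one, Complex.exp_neg]
      · rw [thetaNum_add_period (hre δ'), hμ']
        have e2 : Complex.exp (-(2 * Real.pi) * a) *
            Complex.exp (-(2 * Real.pi * I * (z + I * a))) =
            Complex.exp (-(2 * Real.pi * I * z)) := by
          rw [← Complex.exp_add]
          congr 1
          linear_combination (-2 * Real.pi * a) * Complex.I_sq
        rw [← e2]
        ring
    obtain ⟨C, hC, -, h⟩ := hV.exists_antisymm_factor (hre δ')
    refine ⟨fun z => C 0 * H z, mem_Theta1_of_isTheta (hre (!δ')) (hHθ.const_mul _)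
      (fun z => by rw [hHe]), fun z hz _ => ?_⟩
    have hz' : thetaDen a z ≠ 0 := mul_ne_zero (Complex.exp_ne_zero _) hz
    rw [fδ_mul_add_fδ_mul (hre δ') l hFe z, div_eq_iff hz']
    have hF1 : ∀ w, F (w + I * b / 2) = Complex.exp (-(2 * Real.pi * I * w)) * H w := by
      intro w
      simp only [H]
      rw [← mul_assoc, ← Complex.exp_add, neg_add_cancel, Complex.exp_zero, one_mul]
    rw [hF1, hF1, hHe, ← hC.eq_const (hre δ') z]
    linear_combination H z * h z
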